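/- The q-links are stochastic matrices: for every N ≥ 1, all entries Λ^{N+1}_N(X,Y) are nonnegative, and for every X ∈ 𝔾_{N+1} the series Σ_{Y ∈ 𝔾_N} Λ^{N+1}_N(X,Y) converges and equals 1. -/

import Mathlib

open scoped BigOperators
open Classical

noncomputable section

/-- The double q-lattice Λ = {ζ₋ qᵐ} ∪ {ζ₊ qⁿ}. -/
def Lambda (q zm zp : ℝ) : Set ℝ :=
  {x | ∃ m : ℤ, x = zm * q ^ m} ∪ {x | ∃ n : ℤ, x = zp * q ^ n}

/-- The interval I(a,b) of the double q-lattice. -/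
def qInterval (q zm zp a b : ℝ) : Set ℝ :=
  if b < 0 then Set.Ico a b ∩ Lambda q zm zp
  else if a < 0 then Set.Icc a b ∩ Lambda q zm zp
  else Set.Ioc a b ∩ Lambda q zm zp

/-- N-point configurations on the lattice. -/
def Conf (q zm zp : ℝ) (N : ℕ) : Type :=
  {x : Fin N → ℝ // StrictMono x ∧ ∀ i, x i ∈ Lambda q zm zp}

/-- Interlacement Y ≺ X. -/
def Interlaces (q zm zp : ℝ) {N : ℕ} (Y : Conf q zm zp N) (X : Conf q zm zp (N+1)) : Prop :=
  ∀ i : Fin N, Y.1 i ∈ qInterval q zm zp (X.1 i.castSucc) (X.1 i.succ)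

/-- Vandermonde-type product ∏_{i<j} (x_j - x_i). -/
def vprod {N : ℕ} (x : Fin N → ℝ) : ℝ :=
  ∏ p ∈ Finset.univ.filter (fun p : Fin N × Fin N => p.1 < p.2), (x p.2 - x p.1)

/-- finite q-Pochhammer symbol (a;q)_n, real version. -/
def qpochR (a q : ℝ) (n : ℕ) : ℝ := ∏ m ∈ Finset.range n, (1 - a * q ^ m)

/-- The q-link Λ^{N+1}_N: equal to ∏|yᵢ| (1−q)⋯(1−q^N) ∏_{i<j}(y_j−y_i)/∏_{i<j}(x_j−x_i)
when Y ≺ X and to 0 otherwise. -/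
def qlink (q zm zp : ℝ) (N : ℕ) (X : Conf q zm zp (N+1)) (Y : Conf q zm zp N) : ℝ :=
  if Interlaces q zm zp Y X then
    (∏ i, |Y.1 i|) * qpochR q q N * vprod Y.1 / vprod X.1
  else 0

/-!
The Vandermonde product of `Y` is a determinant and interlacing is a product of the conditions
`yᵢ ∈ I(xᵢ, xᵢ₊₁)`, so summing over `Y` row by row turns the total mass into the determinant of the
moments `∑ y ∈ I(xᵢ, xᵢ₊₁), |y| yʲ`. These are Jackson integrals of monomials, equal to
`(xᵢ₊₁ʲ⁺¹ - xᵢʲ⁺¹) / (1 - qʲ⁺¹)`. The denominators factor out of the columns as `(q; q)_N`, and the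
determinant of the differences is the Vandermonde determinant of `X` after row operations.
-/

section InfiniteProducts

variable {R : Type*} [NormedCommRing R]

theorem summable_norm_prod_pi_fin {n : ℕ} {κ : Fin n → Type*} {f : ∀ i, κ i → R}
    (hf : ∀ i, Summable fun k => ‖f i k‖) : Summable fun y : ∀ i, κ i => ‖∏ i, f i (y i)‖ := by
  induction n with
  | zero => exact Summable.of_finite
  | succ n ih =>
    rw [← (Fin.consEquiv κ).summable_iff]
    simpa [Function.comp_def, Fin.consEquiv, Fin.prod_univ_succ] using
      (hf 0).mul_norm (ih fun i => hf i.succ)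

theorem hasSum_prod_pi_fin {n : ℕ} {κ : Fin n → Type*} {f : ∀ i, κ i → R} {c : Fin n → R}
    (hf : ∀ i, HasSum (f i) (c i)) (hfn : ∀ i, Summable fun k => ‖f i k‖) :
    HasSum (fun y : ∀ i, κ i => ∏ i, f i (y i)) (∏ i, c i) := by
  induction n with
  | zero => simp
  | succ n ih =>
    have htail := ih (fun i => hf i.succ) fun i => hfn i.succ
    have hmul := summable_mul_of_summable_norm' (hfn 0) (hf 0).summable
      (summable_norm_prod_pi_fin fun i => hfn i.succ) htail.summable
    rw [← (Fin.consEquiv κ).hasSum_iff]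
    simpa [Function.comp_def, Fin.consEquiv, Fin.prod_univ_succ] using (hf 0).mul htail hmul

theorem hasSum_det {n : ℕ} {κ : Fin n → Type*} {f : ∀ i, Fin n → κ i → R}
    {C : Matrix (Fin n) (Fin n) R} (hf : ∀ i j, HasSum (f i j) (C i j))
    (hfn : ∀ i j, Summable fun k => ‖f i j k‖) :
    HasSum (fun y : ∀ i, κ i => (Matrix.of fun i j => f i j (y i)).det) C.det := by
  simp only [← Matrix.det_transpose C, ← Matrix.det_transpose (Matrix.of _), Matrix.det_apply,
    Matrix.transpose_apply, Matrix.of_apply]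
  exact hasSum_sum fun σ _ =>
    (hasSum_prod_pi_fin (fun i => hf i (σ i)) fun i => hfn i (σ i)).const_smul _

end InfiniteProducts

section Vandermonde

variable {R : Type*} [CommRing R]

theorem det_pow_succ_sub_pow_castSucc {n : ℕ} (x : Fin (n + 1) → R) :
    (Matrix.of fun i j : Fin n => x i.succ ^ (j + 1 : ℕ) - x i.castSucc ^ (j + 1 : ℕ)).det =
      (Matrix.vandermonde x).det := by
  -- Subtracting from each row of the Vandermonde matrix its predecessor clears the first column.
  let B : Matrix (Fin (n + 1)) (Fin (n + 1)) R := Matrix.of fun i j =>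
    Fin.cases (x 0 ^ (j : ℕ)) (fun i => x i.succ ^ (j : ℕ) - x i.castSucc ^ (j : ℕ)) i
  have hB : (Matrix.vandermonde x).det = B.det :=
    Matrix.det_eq_of_forall_row_eq_smul_add_pred (fun _ => 1)
      (fun j => by simp [B, Matrix.vandermonde_apply])
      (fun i j => by simp [B, Matrix.vandermonde_apply])
  have hB_corner : B 0 0 = 1 := by simp [B]
  have hB_column (i : Fin n) : B i.succ 0 = 0 := by simp [B]
  have hB_minor : B.submatrix Fin.succ Fin.succ =
      Matrix.of fun i j : Fin n => x i.succ ^ (j + 1 : ℕ) - x i.castSucc ^ (j + 1 : ℕ) := by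
    ext i j
    simp [B]
  simp [hB, Matrix.det_succ_column_zero, Fin.sum_univ_succ, hB_corner, hB_column, hB_minor]

theorem det_indicator_mul_pow {n : ℕ} (S : Fin n → Set R) (w : R → R) (y : Fin n → R) :
    (Matrix.of fun i j : Fin n => (S i).indicator (fun t => w t * t ^ (j : ℕ)) (y i)).det =
      (Set.univ.pi S).indicator (fun y => (∏ i, w (y i)) * (Matrix.vandermonde y).det) y := by
  by_cases hy : y ∈ Set.univ.pi S
  · rw [Set.indicator_of_mem hy, ← Matrix.det_mul_column]
    congr 1
    ext i j
    simp [Set.indicator_of_mem (hy i trivial), Matrix.vandermonde_apply]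
  · obtain ⟨i, hi⟩ : ∃ i, y i ∉ S i := by simpa [Set.mem_univ_pi] using hy
    rw [Set.indicator_of_notMem hy]
    exact Matrix.det_eq_zero_of_row_eq_zero i fun j => by
      rw [Matrix.of_apply, Set.indicator_of_notMem hi]

theorem vprod_eq_det_vandermonde {n : ℕ} (x : Fin n → ℝ) :
    vprod x = (Matrix.vandermonde x).det := by
  rw [Matrix.det_vandermonde, vprod, Finset.prod_filter, ← Finset.univ_product_univ,
    Finset.prod_product]
  refine Finset.prod_congr rfl fun i _ => ?_
  rw [← Finset.prod_filter, Finset.filter_lt_eq_Ioi]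

theorem vprod_pos {n : ℕ} {x : Fin n → ℝ} (hx : StrictMono x) : 0 < vprod x :=
  Finset.prod_pos fun _ hp => sub_pos.2 (hx (Finset.mem_filter.1 hp).2)

end Vandermonde

section QPochhammer

theorem qpochR_pos {a q : ℝ} (ha : a < 1) (hq0 : 0 ≤ q) (hq1 : q ≤ 1) (n : ℕ) :
    0 < qpochR a q n := by
  refine Finset.prod_pos fun m _ => sub_pos.2 ?_
  have hpow0 : 0 ≤ q ^ m := pow_nonneg hq0 m
  have hpow1 : q ^ m ≤ 1 := pow_le_one₀ hq0 hq1
  obtain ha0 | ha0 := le_total a 0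
  · exact (mul_nonpos_of_nonpos_of_nonneg ha0 hpow0).trans_lt one_pos
  · exact (mul_le_of_le_one_right ha0 hpow1).trans_lt ha

theorem qpochR_self_eq_prod_fin (q : ℝ) (n : ℕ) :
    qpochR q q n = ∏ j : Fin n, (1 - q ^ (j + 1 : ℕ)) := by
  simp only [qpochR, ← pow_succ', Finset.prod_range]

theorem det_pow_succ_sub_div {n : ℕ} (q : ℝ) (x : Fin (n + 1) → ℝ) :
    (Matrix.of fun i j : Fin n =>
      (x i.succ ^ (j + 1 : ℕ) - x i.castSucc ^ (j + 1 : ℕ)) / (1 - q ^ (j + 1 : ℕ))).det =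
      vprod x / qpochR q q n := by
  simp only [div_eq_inv_mul]
  rw [vprod_eq_det_vandermonde, ← det_pow_succ_sub_pow_castSucc, qpochR_self_eq_prod_fin,
    ← Finset.prod_inv_distrib, ← Matrix.det_mul_row]
  rfl

end QPochhammer

section JacksonIntegral

variable {q zm zp : ℝ}

/-- The forward orbit `{t, tq, tq², …}`, i.e. the set of nodes of the Jackson integral over
the interval between `0` and `t`. -/
def qOrbit (q t : ℝ) : Set ℝ := Set.range fun m : ℕ => t * q ^ m

theorem hasSum_indicator_qOrbit_pow (hq0 : 0 < q) (hq1 : q < 1) {t : ℝ} (ht : t ≠ 0)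
    {k : ℕ} (hk : k ≠ 0) :
    HasSum ((qOrbit q t).indicator fun y => y ^ k) (t ^ k / (1 - q ^ k)) := by
  have hinj : Function.Injective fun m : ℕ => t * q ^ m := fun _ _ h =>
    pow_right_injective₀ hq0 hq1.ne (mul_left_cancel₀ ht h)
  rw [← hasSum_subtype_iff_indicator]
  refine (hinj.hasSum_range_iff (f := fun y => y ^ k)).2 ?_
  have hgeom := (hasSum_geometric_of_lt_one (pow_nonneg hq0.le k)
    (pow_lt_one₀ hq0.le hq1 hk)).mul_left (t ^ k)
  simpa only [Function.comp_def, mul_pow, div_eq_mul_inv, ← pow_mul, mul_comm k] using hgeom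

theorem mul_zpow_mem_qOrbit_iff (hq0 : 0 < q) (hq1 : q < 1) {z : ℝ} (hz : z ≠ 0) (m n : ℤ) :
    z * q ^ n ∈ qOrbit q (z * q ^ m) ↔ m ≤ n := by
  have hnode (j : ℕ) : z * q ^ m * q ^ j = z * q ^ (m + j) := by
    rw [zpow_add₀ hq0.ne', zpow_natCast, mul_assoc]
  constructor
  · rintro ⟨j, hj⟩
    have : m + j = n :=
      zpow_right_injective₀ hq0 hq1.ne (mul_left_cancel₀ hz ((hnode j).symm.trans hj))
    omega
  · intro hmn
    exact ⟨(n - m).toNat, by simp only [hnode]; congr 2; omega⟩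

theorem qOrbit_subset_Lambda (hq : q ≠ 0) {t : ℝ} (ht : t ∈ Lambda q zm zp) :
    qOrbit q t ⊆ Lambda q zm zp := by
  rintro _ ⟨j, rfl⟩
  refine ht.imp ?_ ?_ <;>
  · rintro ⟨n, rfl⟩
    exact ⟨n + j, by simp only [zpow_add₀ hq, zpow_natCast, mul_assoc]⟩

theorem ne_zero_of_mem_Lambda (hq : q ≠ 0) (hzm : zm ≠ 0) (hzp : zp ≠ 0) {t : ℝ}
    (ht : t ∈ Lambda q zm zp) : t ≠ 0 := by
  obtain ⟨n, rfl⟩ | ⟨n, rfl⟩ := ht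
  exacts [mul_ne_zero hzm (zpow_ne_zero n hq), mul_ne_zero hzp (zpow_ne_zero n hq)]

theorem mul_pos_of_mem_qOrbit (hq : 0 < q) {t y : ℝ} (ht : t ≠ 0) (hy : y ∈ qOrbit q t) :
    0 < t * y := by
  obtain ⟨j, rfl⟩ := hy
  rw [← mul_assoc]
  exact mul_pos (mul_self_pos.2 ht) (pow_pos hq j)

theorem mem_qOrbit_iff (hq0 : 0 < q) (hq1 : q < 1) (hzm : zm < 0) (hzp : 0 < zp) {t y : ℝ}
    (ht : t ∈ Lambda q zm zp) (hy : y ∈ Lambda q zm zp) :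
    y ∈ qOrbit q t ↔ (0 < y ∧ y ≤ t) ∨ (t ≤ y ∧ y < 0) := by
  have hneg (n : ℤ) : zm * q ^ n < 0 := mul_neg_of_neg_of_pos hzm (zpow_pos hq0 n)
  have hpos (n : ℤ) : 0 < zp * q ^ n := mul_pos hzp (zpow_pos hq0 n)
  have hsign (h : y ∈ qOrbit q t) : 0 < t * y :=
    mul_pos_of_mem_qOrbit hq0 (ne_zero_of_mem_Lambda hq0.ne' hzm.ne hzp.ne' ht) h
  obtain ⟨m, rfl⟩ | ⟨m, rfl⟩ := ht <;> obtain ⟨n, rfl⟩ | ⟨n, rfl⟩ := hy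
  · simp only [mul_zpow_mem_qOrbit_iff hq0 hq1 hzm.ne, hneg, (hneg _).not_gt, and_true,
      false_and, false_or, mul_le_mul_left_of_neg hzm,
      zpow_le_zpow_iff_right_of_lt_one₀ hq0 hq1]
  · refine iff_of_false (fun h => (mul_neg_of_neg_of_pos (hneg m) (hpos n)).not_gt (hsign h)) ?_
    grind
  · refine iff_of_false (fun h => (mul_neg_of_pos_of_neg (hpos m) (hneg n)).not_gt (hsign h)) ?_
    grind
  · simp only [mul_zpow_mem_qOrbit_iff hq0 hq1 hzp.ne', hpos, (hpos _).not_gt, and_false,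
      true_and, or_false, mul_le_mul_iff_right₀ hzp, zpow_le_zpow_iff_right_of_lt_one₀ hq0 hq1]

theorem qInterval_subset_Lambda (a b : ℝ) : qInterval q zm zp a b ⊆ Lambda q zm zp := by
  unfold qInterval
  split_ifs <;> exact Set.inter_subset_right

/-- The Jackson integral over `(a, b)` is the difference of those over `(0, b)` and `(0, a)`. The
sign of `y` accounts for the three cases in the definition of `qInterval`. -/
theorem indicator_qInterval_abs_mul (hq0 : 0 < q) (hq1 : q < 1) (hzm : zm < 0) (hzp : 0 < zp)
    {a b : ℝ} (ha : a ∈ Lambda q zm zp) (hb : b ∈ Lambda q zm zp) (hab : a ≤ b) (f : ℝ → ℝ) :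
    (qInterval q zm zp a b).indicator (fun y => |y| * f y) =
      (qOrbit q b).indicator (fun y => y * f y) - (qOrbit q a).indicator (fun y => y * f y) := by
  have hne {t : ℝ} (ht : t ∈ Lambda q zm zp) : t ≠ 0 :=
    ne_zero_of_mem_Lambda hq0.ne' hzm.ne hzp.ne' ht
  funext y
  by_cases hy : y ∈ Lambda q zm zp
  · have hy0 := hne hy
    simp only [Pi.sub_apply, Set.indicator_apply, mem_qOrbit_iff hq0 hq1 hzm hzp ha hy,
      mem_qOrbit_iff hq0 hq1 hzm hzp hb hy, qInterval]
    obtain hy0 | hy0 := hy0.lt_or_gt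
    · rw [abs_of_neg hy0]
      grind
    · rw [abs_of_pos hy0]
      grind
  · rw [Pi.sub_apply, Set.indicator_of_notMem fun h => hy (qInterval_subset_Lambda a b h),
      Set.indicator_of_notMem fun h => hy (qOrbit_subset_Lambda hq0.ne' hb h),
      Set.indicator_of_notMem fun h => hy (qOrbit_subset_Lambda hq0.ne' ha h), sub_zero]

theorem hasSum_indicator_qInterval_abs_mul_pow (hq0 : 0 < q) (hq1 : q < 1) (hzm : zm < 0)
    (hzp : 0 < zp) {a b : ℝ} (ha : a ∈ Lambda q zm zp) (hb : b ∈ Lambda q zm zp) (hab : a ≤ b)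
    (k : ℕ) :
    HasSum ((qInterval q zm zp a b).indicator fun y => |y| * y ^ k)
      ((b ^ (k + 1) - a ^ (k + 1)) / (1 - q ^ (k + 1))) := by
  have horbit {t : ℝ} (ht : t ∈ Lambda q zm zp) :=
    hasSum_indicator_qOrbit_pow hq0 hq1 (ne_zero_of_mem_Lambda hq0.ne' hzm.ne hzp.ne' ht)
      k.succ_ne_zero
  simp only [indicator_qInterval_abs_mul hq0 hq1 hzm hzp ha hb hab, ← pow_succ', sub_div]
  exact (horbit hb).sub (horbit ha)

end JacksonIntegral

section Interlacing

variable {q zm zp : ℝ} {N : ℕ}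

/-- The tuples `y` that interlace with `x`, as a product of intervals of the lattice. This is
`Interlaces` for arbitrary real tuples. -/
def interlacingBox (q zm zp : ℝ) (x : Fin (N + 1) → ℝ) : Set (Fin N → ℝ) :=
  Set.univ.pi fun i => qInterval q zm zp (x i.castSucc) (x i.succ)

theorem lt_of_mem_qInterval {a b c d y z : ℝ} (hbc : b ≤ c)
    (hy : y ∈ qInterval q zm zp a b) (hz : z ∈ qInterval q zm zp c d) : y < z := by
  unfold qInterval at hy hz
  grind

theorem strictMono_of_mem_interlacingBox {x : Fin (N + 1) → ℝ} (hx : Monotone x)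
    {y : Fin N → ℝ} (hy : y ∈ interlacingBox q zm zp x) : StrictMono y := fun i j hij =>
  lt_of_mem_qInterval (hx (Fin.succ_le_castSucc_iff.2 hij)) (hy i trivial) (hy j trivial)

theorem hasSum_indicator_interlacingBox (hq0 : 0 < q) (hq1 : q < 1) (hzm : zm < 0) (hzp : 0 < zp)
    {x : Fin (N + 1) → ℝ} (hx : Monotone x) (hxL : ∀ i, x i ∈ Lambda q zm zp) :
    HasSum ((interlacingBox q zm zp x).indicator fun y => (∏ i, |y i|) * vprod y)
      (vprod x / qpochR q q N) := by
  have hmoment (i j : Fin N) :=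
    hasSum_indicator_qInterval_abs_mul_pow hq0 hq1 hzm hzp (hxL i.castSucc) (hxL i.succ)
      (hx i.castSucc_lt_succ.le) j
  have hdet := hasSum_det hmoment fun i j => (hmoment i j).summable.norm
  simp only [det_indicator_mul_pow, ← vprod_eq_det_vandermonde] at hdet
  rw [← det_pow_succ_sub_div]
  exact hdet

theorem qlink_eq_indicator (X : Conf q zm zp (N + 1)) (Y : Conf q zm zp N) :
    qlink q zm zp N X Y = qpochR q q N / vprod X.1 *
      (interlacingBox q zm zp X.1).indicator (fun y => (∏ i, |y i|) * vprod y) Y.1 := by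
  have hmem : Y.1 ∈ interlacingBox q zm zp X.1 ↔ Interlaces q zm zp Y X := Set.mem_univ_pi
  simp only [qlink, Set.indicator_apply, hmem]
  split_ifs <;> ring

theorem hasSum_conf_indicator_interlacingBox_iff {f : (Fin N → ℝ) → ℝ} {x : Fin (N + 1) → ℝ}
    (hx : Monotone x) {s : ℝ} :
    HasSum (fun Y : Conf q zm zp N => (interlacingBox q zm zp x).indicator f Y.1) s ↔
      HasSum ((interlacingBox q zm zp x).indicator f) s := by
  refine hasSum_subtype_iff_of_support_subset (Set.support_indicator_subset.trans fun y hy => ?_)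
  exact ⟨strictMono_of_mem_interlacingBox hx hy,
    fun i => qInterval_subset_Lambda _ _ (hy i trivial)⟩

end Interlacing

theorem qlink_nonneg {q zm zp : ℝ} (hq0 : 0 ≤ q) (hq1 : q < 1) {N : ℕ}
    (X : Conf q zm zp (N + 1)) (Y : Conf q zm zp N) : 0 ≤ qlink q zm zp N X Y := by
  rw [qlink_eq_indicator]
  exact mul_nonneg (div_pos (qpochR_pos hq1 hq0 hq1.le N) (vprod_pos X.2.1)).le
    (Set.indicator_apply_nonneg fun _ =>
      mul_nonneg (Finset.prod_nonneg fun _ _ => abs_nonneg _) (vprod_pos Y.2.1).le)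

/-- The q-links are stochastic matrices: all entries are nonnegative and every row
sums to 1 (the series converging to 1). -/
theorem qlink_stochastic (q zm zp : ℝ) (hq0 : 0 < q) (hq1 : q < 1) (hzm : zm < 0)
    (hzp : 0 < zp) (N : ℕ) (hN : 1 ≤ N) :
    (∀ (X : Conf q zm zp (N+1)) (Y : Conf q zm zp N), 0 ≤ qlink q zm zp N X Y) ∧
    (∀ X : Conf q zm zp (N+1), HasSum (fun Y : Conf q zm zp N => qlink q zm zp N X Y) 1) := by
  refine ⟨qlink_nonneg hq0.le hq1, fun X => ?_⟩
  have hpoch : qpochR q q N ≠ 0 := (qpochR_pos hq1 hq0.le hq1.le N).ne'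
  have hvprod : vprod X.1 ≠ 0 := (vprod_pos X.2.1).ne'
  have hbox := (hasSum_conf_indicator_interlacingBox_iff X.2.1.monotone).2
    (hasSum_indicator_interlacingBox hq0 hq1 hzm hzp X.2.1.monotone X.2.2)
  have hrow := hbox.mul_left (qpochR q q N / vprod X.1)
  rw [div_mul_div_cancel₀' hpoch, div_self hvprod] at hrow
  simpa only [qlink_eq_indicator] using hrow

end
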